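/- arXiv:math/0302222 — 2 statements merged into one kernel-verified Lean document; each statement's English description precedes it below -/
import Mathlib

section
/- Let (M,Δ) be a discrete quantum group with left invariant weight φ and modular automorphism group σ^φ, and let m_ℝ be an invariant mean on L^∞(ℝ). For ω ∈ M_*, define ω' on M by ω'(x) = m_ℝ(t ↦ ω(σ_t^φ(x))). Then ω' is a normal functional on M, ‖ω'‖ ≤ ‖ω‖, and ω' is σ^φ-invariant: ω'∘σ_t^φ = ω' for all t ∈ ℝ. -/
/-!
An interface for (von Neumann algebraic) locally compact quantum groups and
discrete quantum groups, following Kustermans–Vaes, encoded via the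
multiplicative unitary `W` acting on (a model `HH` of) `H ⊗ H`.
-/

open scoped ComplexInnerProductSpace ComplexOrder ENNReal
open Filter Topology

noncomputable section

section Functionals

variable {H : Type} [NormedAddCommGroup H] [InnerProductSpace ℂ H] [CompleteSpace H]

/-- The vector functional `ω_{ξ,η}(x) = ⟪η, x ξ⟫` on `B(H)`. -/
def vecFunc (ξ η : H) : (H →L[ℂ] H) →L[ℂ] ℂ :=
  (innerSL ℂ η).comp (ContinuousLinearMap.apply ℂ H ξ)

/-- A bounded functional on `B(H)` is *normal* if it lies in the norm closure of the
linear span of the vector functionals, i.e. it comes from a trace class operator.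
The normal functionals on a von Neumann algebra `M ⊆ B(H)` are exactly the
restrictions of these. -/
def NormalFn (ω : (H →L[ℂ] H) →L[ℂ] ℂ) : Prop :=
  ω ∈ closure (Submodule.span ℂ (Set.range fun p : H × H => vecFunc p.1 p.2) : Set _)

/-- A state of `B(H)` (every state of a von Neumann subalgebra of `B(H)` extends to one). -/
def IsStateFn (m : (H →L[ℂ] H) → ℂ) : Prop :=
  IsLinearMap ℂ m ∧ m 1 = 1 ∧ ∀ x, 0 ≤ m (star x * x)

/-- A character of the `C^*`-algebra `S ⊆ B(H)` (given with some bounded linear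
extension to `B(H)`): a multiplicative functional which is nonzero on `S`. -/
def IsCharacterOn (S : Set (H →L[ℂ] H)) (χ : (H →L[ℂ] H) →L[ℂ] ℂ) : Prop :=
  (∀ a ∈ S, ∀ b ∈ S, χ (a * b) = χ a * χ b) ∧ ∃ a ∈ S, χ a ≠ 0

/-- Complete positivity of a map on `B(H)`: each matrix amplification preserves
positivity; positivity in the C^*-algebra `M_k(B(H))` is witnessed as `star B * B`. -/
def CompletelyPositiveFn (T : (H →L[ℂ] H) → (H →L[ℂ] H)) : Prop :=
  ∀ (k : ℕ) (A : Matrix (Fin k) (Fin k) (H →L[ℂ] H)),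
    (∃ B : Matrix (Fin k) (Fin k) (H →L[ℂ] H), A = star B * B) →
      ∃ C : Matrix (Fin k) (Fin k) (H →L[ℂ] H), A.map T = star C * C

/-- A conditional expectation (unital positive linear projection) of `B(H)`
onto the subset `S`. -/
def IsCondExpOnto (E : (H →L[ℂ] H) → (H →L[ℂ] H)) (S : Set (H →L[ℂ] H)) : Prop :=
  IsLinearMap ℂ E ∧ E 1 = 1 ∧ (∀ x, E x ∈ S) ∧ (∀ x ∈ S, E x = x) ∧
    ∀ x, (E (star x * x)).IsPositive

/-- Nuclearity of the `C^*`-algebra `S ⊆ B(H)`, in the form of the completely positive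
approximation property: the identity of `S` is a pointwise norm limit of finite rank
contractive completely positive maps. -/
def NuclearSet (S : Set (H →L[ℂ] H)) : Prop :=
  ∃ (ι : Type) (l : Filter ι), l.NeBot ∧
    ∃ T : ι → ((H →L[ℂ] H) → (H →L[ℂ] H)),
      (∀ j, IsLinearMap ℂ (T j) ∧ CompletelyPositiveFn (T j) ∧
        FiniteDimensional ℂ ↥(Submodule.span ℂ (Set.range (T j))) ∧
        (∀ x ∈ S, T j x ∈ S) ∧ ∀ x, ‖T j x‖ ≤ ‖x‖) ∧
      ∀ x ∈ S, Tendsto (fun j => ‖T j x - x‖) l (𝓝 0)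

end Functionals

/-- A (von Neumann algebraic) locally compact quantum group `(M, Δ)`, presented on the
GNS space `H` of its left invariant weight, via its multiplicative unitary `W` acting on
`HH`, a model of the Hilbert space tensor product `H ⊗ H`. The comultiplication is
`Δ(x) = W*(1 ⊗ x)W`. Slice maps `lslice ω = ω ⊗ id` and `rslice ω = id ⊗ ω` are part of
the data, pinned down by their defining inner product identities, and `conv` is the
convolution product `ω * χ = (ω ⊗ χ) ∘ Δ` of functionals. -/
structure QGroup (H HH : Type)
    [NormedAddCommGroup H] [InnerProductSpace ℂ H] [CompleteSpace H]
    [NormedAddCommGroup HH] [InnerProductSpace ℂ HH] [CompleteSpace HH] where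
  /-- the tensor embedding `H × H → H ⊗ H = HH` -/
  tensor : H →ₗ[ℂ] H →ₗ[ℂ] HH
  tensor_inner : ∀ a b c d : H, ⟪tensor a c, tensor b d⟫ = ⟪a, b⟫ * ⟪c, d⟫
  tensor_dense : Dense (Submodule.span ℂ (Set.range fun p : H × H => tensor p.1 p.2) : Set HH)
  /-- the tensor flip `Σ` -/
  flipU : HH →L[ℂ] HH
  flip_tensor : ∀ a b : H, flipU (tensor a b) = tensor b a
  /-- amplification of operators: `tens a b = a ⊗ b` -/
  tens : (H →L[ℂ] H) → (H →L[ℂ] H) → (HH →L[ℂ] HH)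
  tens_apply : ∀ a b ξ η, tens a b (tensor ξ η) = tensor (a ξ) (b η)
  tens_one : tens 1 1 = 1
  tens_mul : ∀ a b c d, tens a b * tens c d = tens (a * c) (b * d)
  tens_star : ∀ a b, star (tens a b) = tens (star a) (star b)
  tens_add_left : ∀ a b c, tens (a + b) c = tens a c + tens b c
  tens_add_right : ∀ a b c, tens a (b + c) = tens a b + tens a c
  tens_smul_left : ∀ (μ : ℂ) a b, tens (μ • a) b = μ • tens a b
  tens_smul_right : ∀ (μ : ℂ) a b, tens a (μ • b) = μ • tens a b
  /-- the underlying von Neumann algebra -/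
  M : VonNeumannAlgebra H
  /-- the multiplicative unitary -/
  W : HH →L[ℂ] HH
  W_unitary : W ∈ unitary (HH →L[ℂ] HH)
  /-- the left slice map `lslice ω X = (ω ⊗ id)(X)` -/
  lslice : ((H →L[ℂ] H) →L[ℂ] ℂ) → (HH →L[ℂ] HH) → (H →L[ℂ] H)
  /-- the right slice map `rslice ω X = (id ⊗ ω)(X)` -/
  rslice : ((H →L[ℂ] H) →L[ℂ] ℂ) → (HH →L[ℂ] HH) → (H →L[ℂ] H)
  rslice_vec : ∀ (ξ η : H) (X : HH →L[ℂ] HH) (α β : H),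
    ⟪β, rslice (vecFunc ξ η) X α⟫ = ⟪tensor β η, X (tensor α ξ)⟫
  lslice_vec : ∀ (ξ η : H) (X : HH →L[ℂ] HH) (α β : H),
    ⟪β, lslice (vecFunc ξ η) X α⟫ = ⟪tensor η β, X (tensor ξ α)⟫
  lslice_apply : ∀ ω X (α β : H), ⟪β, lslice ω X α⟫ = ω (rslice (vecFunc α β) X)
  rslice_apply : ∀ ω X (α β : H), ⟪β, rslice ω X α⟫ = ω (lslice (vecFunc α β) X)
  /-- convolution of functionals: `conv ω χ = (ω ⊗ χ) ∘ Δ` -/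
  conv : ((H →L[ℂ] H) →L[ℂ] ℂ) → ((H →L[ℂ] H) →L[ℂ] ℂ) → ((H →L[ℂ] H) →L[ℂ] ℂ)
  conv_apply : ∀ ω χ x, conv ω χ x = ω (rslice χ (star W * tens 1 x * W))
  /-- the algebra `A` of "continuous functions" sits inside `M` -/
  rho_mem : ∀ ω, rslice ω W ∈ M

namespace QGroup

variable {H HH : Type} [NormedAddCommGroup H] [InnerProductSpace ℂ H] [CompleteSpace H]
  [NormedAddCommGroup HH] [InnerProductSpace ℂ HH] [CompleteSpace HH]
variable (Q : QGroup H HH)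

/-- The comultiplication `Δ(x) = W*(1 ⊗ x)W`. -/
def Delta (x : H →L[ℂ] H) : HH →L[ℂ] HH := star Q.W * Q.tens 1 x * Q.W

/-- The dual multiplicative unitary `Ŵ = Σ W* Σ`. -/
def What : HH →L[ℂ] HH := Q.flipU * star Q.W * Q.flipU

/-- The dual comultiplication `Δ̂(x) = Ŵ*(1 ⊗ x)Ŵ`. -/
def DeltaHat (x : H →L[ℂ] H) : HH →L[ℂ] HH := star Q.What * Q.tens 1 x * Q.What

/-- `λ(ω) = (ω ⊗ id)(W)`. -/
def lam (ω : (H →L[ℂ] H) →L[ℂ] ℂ) : H →L[ℂ] H := Q.lslice ω Q.W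

/-- `(id ⊗ ω)(W)`. -/
def rho (ω : (H →L[ℂ] H) →L[ℂ] ℂ) : H →L[ℂ] H := Q.rslice ω Q.W

/-- The `C^*`-algebra `A`, the norm closure of `{(id ⊗ ω)(W) : ω normal}`. -/
def Aalg : Set (H →L[ℂ] H) := closure {x | ∃ ω, NormalFn ω ∧ x = Q.rho ω}

/-- The dual `C^*`-algebra `Â`, the norm closure of `{λ(ω) : ω normal}`. -/
def Ahat : Set (H →L[ℂ] H) := closure {x | ∃ ω, NormalFn ω ∧ x = Q.lam ω}

/-- The dual von Neumann algebra `M̂`, the double commutant of `Â`. -/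
def Mhat : Set (H →L[ℂ] H) := Set.centralizer (Set.centralizer (Q.Ahat ∪ (star '' Q.Ahat)))

/-- `(M, Δ)` admits an invariant mean: a state of `M` (extended to `B(H)`) which is both
left and right invariant. -/
def HasInvariantMean : Prop :=
  ∃ m : (H →L[ℂ] H) → ℂ, IsStateFn m ∧
    (∀ ω, NormalFn ω → ∀ x ∈ Q.M, m (Q.lslice ω (Q.Delta x)) = ω 1 * m x) ∧
    (∀ ω, NormalFn ω → ∀ x ∈ Q.M, m (Q.rslice ω (Q.Delta x)) = ω 1 * m x)

/-- Strong Voiculescu amenability: a net of unit vectors `ξ_j` with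
`‖W*(η ⊗ ξ_j) - η ⊗ ξ_j‖ → 0` for every `η`. -/
def StronglyAmenable : Prop :=
  ∃ (ι : Type) (l : Filter ι), l.NeBot ∧ ∃ ξ : ι → H, (∀ j, ‖ξ j‖ = 1) ∧
    ∀ η : H, Tendsto (fun j => ‖star Q.W (Q.tensor η (ξ j)) - Q.tensor η (ξ j)‖) l (𝓝 0)

/-- An `Â`-linear state of `M̂` (extended to `B(H)`): `ϱ(a x b) = ϱ(a)ϱ(x)ϱ(b)` for
`a, b ∈ Â`, `x ∈ M̂`. -/
def AhatLinearState (ϱ : (H →L[ℂ] H) → ℂ) : Prop :=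
  IsStateFn ϱ ∧ ∀ a ∈ Q.Ahat, ∀ b ∈ Q.Ahat, ∀ x ∈ Q.Mhat, ϱ (a * x * b) = ϱ a * ϱ x * ϱ b

/-- A (nondegenerate) representation `π` of the `C^*`-algebra `A` on a Hilbert space `Hp`,
together with a model `HpH` of `Hp ⊗ H` and the unitary `Wp = (π ⊗ id)(W)`, which is
pinned down by the identity `⟪β ⊗ η, (π ⊗ id)(W)(α ⊗ ξ)⟫ = ⟪β, π((id ⊗ ω_{ξ,η})(W)) α⟫`. -/
def IsRepOn (Hp HpH : Type) [NormedAddCommGroup Hp] [InnerProductSpace ℂ Hp]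
    [CompleteSpace Hp] [NormedAddCommGroup HpH] [InnerProductSpace ℂ HpH] [CompleteSpace HpH]
    (π : (H →L[ℂ] H) → (Hp →L[ℂ] Hp)) (tp : Hp →ₗ[ℂ] H →ₗ[ℂ] HpH)
    (Wp : HpH →L[ℂ] HpH) : Prop :=
  (∀ a ∈ Q.Aalg, ∀ b ∈ Q.Aalg, π (a + b) = π a + π b) ∧
  (∀ (c : ℂ), ∀ a ∈ Q.Aalg, π (c • a) = c • π a) ∧
  (∀ a ∈ Q.Aalg, ∀ b ∈ Q.Aalg, π (a * b) = π a * π b) ∧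
  (∀ a ∈ Q.Aalg, π (star a) = star (π a)) ∧
  (∀ a ∈ Q.Aalg, ‖π a‖ ≤ ‖a‖) ∧
  (∀ (a b : Hp) (c d : H), ⟪tp a c, tp b d⟫ = ⟪a, b⟫ * ⟪c, d⟫) ∧
  Dense (Submodule.span ℂ (Set.range fun p : Hp × H => tp p.1 p.2) : Set HpH) ∧
  Wp ∈ unitary (HpH →L[ℂ] HpH) ∧
  ∀ (α β : Hp) (ξ η : H), ⟪tp β η, Wp (tp α ξ)⟫ = ⟪β, π (Q.rho (vecFunc ξ η)) α⟫

/-- Cyclicity of a representation of `A`. -/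
def IsCyclicRep (Hp : Type) [NormedAddCommGroup Hp] [InnerProductSpace ℂ Hp] [CompleteSpace Hp]
    (π : (H →L[ℂ] H) → (Hp →L[ℂ] Hp)) : Prop :=
  ∃ ζ : Hp, Dense (Submodule.span ℂ {v : Hp | ∃ a ∈ Q.Aalg, v = π a ζ} : Set Hp)

end QGroup

/-- A discrete quantum group: a locally compact quantum group whose underlying von Neumann
algebra decomposes as `M = ⊕_{α ∈ I} M_{n_α}(ℂ)` with matrix units `e α k l` diagonalising
the left invariant weight `φ = ⊕_α Tr(h_α ·)`, `h_α = ∑_k ν α k • e α k k`. The data also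
records the GNS map `Λ` of `φ` (pinned on the finitely supported part `n_φ`), the value of
the weight `φ` (and `φ ⊗ φ`), the modular group `Δ_φ^{it} = Dphi t`, the modular
conjugations `J`, `Ĵ` and the cyclic vector `ξ̂` of the dual Haar state. -/
structure DiscreteQGroup (H HH : Type)
    [NormedAddCommGroup H] [InnerProductSpace ℂ H] [CompleteSpace H]
    [NormedAddCommGroup HH] [InnerProductSpace ℂ HH] [CompleteSpace HH]
    extends QGroup H HH where
  /-- index set of the matrix blocks -/
  I : Type
  /-- sizes of the matrix blocks -/
  nn : I → ℕ
  npos : ∀ α, 0 < nn α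
  /-- matrix units -/
  e : (α : I) → Fin (nn α) → Fin (nn α) → (H →L[ℂ] H)
  e_mem : ∀ α k l, e α k l ∈ M
  e_star : ∀ α k l, star (e α k l) = e α l k
  e_mul : ∀ α k l k' l', e α k l * e α k' l' = if l = k' then e α k l' else 0
  e_orth : ∀ α β, α ≠ β → ∀ k l k' l', e α k l * e β k' l' = 0
  z_comm : ∀ α x, x ∈ M → x * (∑ k, e α k k) = (∑ k, e α k k) * x
  z_hasSum : ∀ ξ : H, HasSum (fun α => (∑ k, e α k k) ξ) ξ
  block_span : ∀ α, ∀ x ∈ M, ∃ c : Fin (nn α) → Fin (nn α) → ℂ,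
      x * (∑ k, e α k k) = ∑ k, ∑ l, c k l • e α k l
  /-- eigenvalues of the density matrices `h_α` -/
  ν : (α : I) → Fin (nn α) → ℝ
  ν_pos : ∀ α k, 0 < ν α k
  /-- the left invariant weight, on positive elements -/
  phi : (H →L[ℂ] H) → ℝ≥0∞
  phi_add : ∀ x y : H →L[ℂ] H, x.IsPositive → y.IsPositive → phi (x + y) = phi x + phi y
  phi_smul : ∀ (c : ℝ) (x : H →L[ℂ] H), 0 ≤ c → x.IsPositive →
      phi (c • x) = ENNReal.ofReal c * phi x
  phi_e : ∀ α k, phi (e α k k) = ENNReal.ofReal (ν α k)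
  /-- the complex-valued extension of `φ` to (a linear extension off) `m_φ` -/
  phiC : (H →L[ℂ] H) →ₗ[ℂ] ℂ
  phiC_e : ∀ α k l, phiC (e α k l) = if k = l then (ν α k : ℂ) else 0
  phiC_phi : ∀ x : H →L[ℂ] H, x.IsPositive → phi x ≠ ⊤ → phiC x = ((phi x).toReal : ℂ)
  /-- the tensor product weight `φ ⊗ φ`, on positive elements -/
  phi2 : (HH →L[ℂ] HH) → ℝ≥0∞
  phi2_tens : ∀ a b : H →L[ℂ] H, a.IsPositive → b.IsPositive →
      phi2 (tens a b) = phi a * phi b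
  phi2_add : ∀ X Y : HH →L[ℂ] HH, X.IsPositive → Y.IsPositive → phi2 (X + Y) = phi2 X + phi2 Y
  /-- the GNS map `Λ` of `φ` (its restriction to the finitely supported part is the
  canonical one; it is extended linearly) -/
  Lam : (H →L[ℂ] H) →ₗ[ℂ] H
  Lam_inner : ∀ x y : H →L[ℂ] H, x ∈ M → y ∈ M →
      (∃ F : Finset I, x * (∑ α ∈ F, ∑ k, e α k k) = x) →
      (∃ F : Finset I, y * (∑ α ∈ F, ∑ k, e α k k) = y) →
      ⟪Lam x, Lam y⟫ = phiC (star x * y)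
  Lam_dense : Dense {ξ : H | ∃ x, x ∈ M ∧
      (∃ F : Finset I, x * (∑ α ∈ F, ∑ k, e α k k) = x) ∧ ξ = Lam x}
  /-- the GNS map `Λ ⊗ Λ` of `φ ⊗ φ` -/
  Lam2 : (HH →L[ℂ] HH) →ₗ[ℂ] HH
  Lam2_tens : ∀ a b, Lam2 (tens a b) = tensor (Lam a) (Lam b)
  /-- the defining property of the multiplicative unitary:
  `W*(Λ(x) ⊗ Λ(y)) = (Λ ⊗ Λ)(Δ(y)(x ⊗ 1))` -/
  W_Lam : ∀ x y : H →L[ℂ] H, x ∈ M → y ∈ M →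
      (∃ F : Finset I, x * (∑ α ∈ F, ∑ k, e α k k) = x) →
      (∃ F : Finset I, y * (∑ α ∈ F, ∑ k, e α k k) = y) →
      star W (tensor (Lam x) (Lam y)) = Lam2 ((star W * tens 1 y * W) * tens x 1)
  /-- the modular group of `φ`: `Dphi t = Δ_φ^{it}` -/
  Dphi : ℝ → (H →L[ℂ] H)
  Dphi_unitary : ∀ t, Dphi t ∈ unitary (H →L[ℂ] H)
  Dphi_zero : Dphi 0 = 1
  Dphi_add : ∀ s t, Dphi (s + t) = Dphi s * Dphi t
  Dphi_cont : ∀ ξ : H, Continuous fun t => Dphi t ξ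
  Dphi_e : ∀ (t : ℝ) α k l,
      Dphi t * e α k l * star (Dphi t)
        = Complex.exp (Complex.I * (t : ℂ) * (Real.log (ν α k / ν α l) : ℂ)) • e α k l
  Dphi_Lam : ∀ (t : ℝ) (x : H →L[ℂ] H), x ∈ M →
      (∃ F : Finset I, x * (∑ α ∈ F, ∑ k, e α k k) = x) →
      Dphi t (Lam x) = Lam (Dphi t * x * star (Dphi t))
  /-- the modular conjugation `J` of `φ` -/
  Jmod : H → H
  Jmod_add : ∀ ξ η, Jmod (ξ + η) = Jmod ξ + Jmod η
  Jmod_smul : ∀ (c : ℂ) ξ, Jmod (c • ξ) = (starRingEnd ℂ) c • Jmod ξ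
  Jmod_invol : ∀ ξ, Jmod (Jmod ξ) = ξ
  Jmod_inner : ∀ ξ η, ⟪Jmod ξ, Jmod η⟫ = ⟪η, ξ⟫
  /-- the modular conjugation `Ĵ` of the dual weight `φ̂` -/
  Jhat : H → H
  Jhat_add : ∀ ξ η, Jhat (ξ + η) = Jhat ξ + Jhat η
  Jhat_smul : ∀ (c : ℂ) ξ, Jhat (c • ξ) = (starRingEnd ℂ) c • Jhat ξ
  Jhat_invol : ∀ ξ, Jhat (Jhat ξ) = ξ
  Jhat_inner : ∀ ξ η, ⟪Jhat ξ, Jhat η⟫ = ⟪η, ξ⟫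
  /-- `Ĵ ⊗ J` on `HH` -/
  JJ : HH → HH
  JJ_tensor : ∀ a b, JJ (tensor a b) = tensor (Jhat a) (Jmod b)
  /-- `(Ĵ ⊗ J) W (Ĵ ⊗ J) = W*` -/
  JJ_W : ∀ ζ : HH, W (JJ ζ) = JJ (star W ζ)
  /-- the cyclic unit vector implementing the dual Haar state `φ̂ = ω_{ξ̂}` -/
  xihat : H
  xihat_norm : ‖xihat‖ = 1

namespace DiscreteQGroup

variable {H HH : Type} [NormedAddCommGroup H] [InnerProductSpace ℂ H] [CompleteSpace H]
  [NormedAddCommGroup HH] [InnerProductSpace ℂ HH] [CompleteSpace HH]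
variable (Q : DiscreteQGroup H HH)

/-- The minimal central projection `z_α`. -/
def z (α : Q.I) : H →L[ℂ] H := ∑ k, Q.e α k k

/-- The central projection `z_F = ∑_{α ∈ F} z_α` for finite `F ⊆ I`. -/
def zF (F : Finset Q.I) : H →L[ℂ] H := ∑ α ∈ F, Q.z α

/-- Finitely supported elements of `M` (a dense subspace of `n_φ`). -/
def FinSupp (x : H →L[ℂ] H) : Prop := ∃ F : Finset Q.I, x * Q.zF F = x

/-- The modular automorphism group `σ^φ_t = Ad(Δ_φ^{it})` of the left Haar weight. -/
def sigma (t : ℝ) (x : H →L[ℂ] H) : H →L[ℂ] H := Q.Dphi t * x * star (Q.Dphi t)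

/-- The natural positive cone `P_φ^♮`, the closure of `{x J Λ(x)}`. -/
def NatCone : Set H :=
  closure {ξ : H | ∃ x, x ∈ Q.M ∧ Q.FinSupp x ∧ ξ = x (Q.Jmod (Q.Lam x))}

end DiscreteQGroup


variable {H HH : Type} [NormedAddCommGroup H] [InnerProductSpace ℂ H] [CompleteSpace H]
  [NormedAddCommGroup HH] [InnerProductSpace ℂ HH] [CompleteSpace HH]

/-!
Let `U` be a strongly continuous unitary representation of `G` (here the modular group of `φ`,
with `G = ℝ`) and `σ_t = Ad U_t`. Averaging `ω ∘ σ_t` against an invariant mean is a linear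
contraction from the normal functionals to the dual of `B(H)`, so it suffices to see that it maps
a total set of normal functionals into the (norm closed) space of normal functionals.
If `ξ` and `η` are joint eigenvectors of `U`, then `t ↦ ω_{ξ,η}(σ_t(x))` is a multiple of a fixed
character of `G`, whose mean is `1` or `0`; hence the average of `ω_{ξ,η}` is `ω_{ξ,η}` or `0`.
For a discrete quantum group the vectors `Λ(e_{kl})` are joint eigenvectors of the modular group
and span a dense subspace of `H`.
-/

open scoped BoundedContinuousFunction ComplexConjugate
open Unitary (conjStarAlgAut)

section Mean

variable {X : Type*} [TopologicalSpace X]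

/-- A mean on a space `X`: a unital positive functional on the bounded continuous functions. -/
structure IsMean (m : (X →ᵇ ℂ) →ₗ[ℂ] ℂ) : Prop where
  map_one : m 1 = 1
  nonneg : ∀ f : X →ᵇ ℂ, (∀ t, 0 ≤ f t) → 0 ≤ m f

namespace IsMean

variable {m : (X →ᵇ ℂ) →ₗ[ℂ] ℂ}

lemma im_eq_zero (hm : IsMean m) {f : X →ᵇ ℂ} (hf : ∀ t, (f t).im = 0) : (m f).im = 0 := by
  have shifted_nonneg : 0 ≤ m (f + (‖f‖ : ℂ) • (1 : X →ᵇ ℂ)) := by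
    refine hm.nonneg _ fun t => ?_
    have : -‖f‖ ≤ (f t).re :=
      (abs_le.1 ((Complex.abs_re_le_norm _).trans (f.norm_coe_le_norm t))).1
    simp only [Complex.le_def, BoundedContinuousFunction.coe_add,
      BoundedContinuousFunction.coe_smul, Pi.add_apply, BoundedContinuousFunction.coe_one]
    simpa [hf t] using by linarith
  simpa [hm.map_one] using (Complex.le_def.1 shifted_nonneg).2.symm

lemma map_star (hm : IsMean m) (f : X →ᵇ ℂ) : m (star f) = conj (m f) := by
  have im_add : (m (f + star f)).im = 0 := hm.im_eq_zero fun t => by simp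
  have im_sub : (m (Complex.I • (f - star f))).im = 0 := hm.im_eq_zero fun t => by simp
  simp only [map_add, map_sub, map_smul, Complex.add_im, Complex.sub_re, smul_eq_mul,
    Complex.I_mul_im] at im_add im_sub
  apply Complex.ext
  · simpa using by linarith
  · simpa using by linarith

lemma norm_sq_apply_le (hm : IsMean m) (f : X →ᵇ ℂ) : (‖m f‖ : ℂ) ^ 2 ≤ m (star f * f) := by
  have variance_nonneg : 0 ≤ m (star (f - m f • 1) * (f - m f • 1)) :=
    hm.nonneg _ fun t => star_mul_self_nonneg _
  have variance_eq :
      m (star (f - m f • 1) * (f - m f • 1)) = m (star f * f) - conj (m f) * m f := by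
    simp only [star_sub, star_smul, star_one, sub_mul, mul_sub, smul_mul_assoc, mul_smul_comm,
      one_mul, mul_one, map_sub, map_smul, smul_eq_mul, hm.map_star, hm.map_one]
    simp
  rwa [variance_eq, sub_nonneg, Complex.conj_mul'] at variance_nonneg

lemma norm_apply_le (hm : IsMean m) (f : X →ᵇ ℂ) : ‖m f‖ ≤ ‖f‖ := by
  have mean_sq_le : m (star f * f) ≤ (‖f‖ : ℂ) ^ 2 := by
    have : 0 ≤ m ((‖f‖ : ℂ) ^ 2 • 1 - star f * f) := by
      refine hm.nonneg _ fun t => ?_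
      have : ‖f t‖ ^ 2 ≤ ‖f‖ ^ 2 := by gcongr; exact f.norm_coe_le_norm t
      simpa [Complex.conj_mul'] using mod_cast this
    simpa [hm.map_one] using this
  have : ‖m f‖ ^ 2 ≤ ‖f‖ ^ 2 := mod_cast (hm.norm_sq_apply_le f).trans mean_sq_le
  exact le_of_sq_le_sq this (norm_nonneg f)

end IsMean

/-- A right invariant mean on `X`. The translate of `f` is passed as a function `g` because
translations of `X` are not assumed continuous. -/
structure IsInvariantMean [Add X] (m : (X →ᵇ ℂ) →ₗ[ℂ] ℂ) : Prop extends IsMean m where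
  map_translate : ∀ (f g : X →ᵇ ℂ) (s : X), (∀ t, g t = f (t + s)) → m g = m f

end Mean

section NormalFunctionals

lemma map_mem_of_dense_span {R R' E F : Type*} [Semiring R] [Semiring R'] {σ : R →+* R'}
    [AddCommMonoid E] [Module R E] [TopologicalSpace E] [AddCommMonoid F] [Module R' F]
    [TopologicalSpace F] {S : Set E} (hS : Dense (Submodule.span R S : Set E)) (f : E →SL[σ] F)
    {K : Submodule R' F} (hK : IsClosed (K : Set F)) (hSK : ∀ v ∈ S, f v ∈ K) (v : E) : f v ∈ K :=
  closure_minimal (Submodule.span_le (p := K.comap f.toLinearMap).2 hSK)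
    (hK.preimage f.continuous) (hS v)

variable {E : Type} [NormedAddCommGroup E] [InnerProductSpace ℂ E]

variable (E) in
/-- The normal functionals as a closed subspace of the dual of `B(E)`; membership is `NormalFn`
by definition. -/
def normalFunctionals : Submodule ℂ ((E →L[ℂ] E) →L[ℂ] ℂ) :=
  (Submodule.span ℂ (Set.range fun p : E × E => vecFunc p.1 p.2)).topologicalClosure

lemma vecFunc_mem_normalFunctionals (ξ η : E) : vecFunc ξ η ∈ normalFunctionals E :=
  Submodule.le_topologicalClosure _ (Submodule.subset_span ⟨(ξ, η), rfl⟩)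

lemma isClosed_normalFunctionals :
    IsClosed (normalFunctionals E : Set ((E →L[ℂ] E) →L[ℂ] ℂ)) :=
  Submodule.isClosed_topologicalClosure _

lemma normalFunctionals_le_of_dense_span {S : Set E}
    (hS : Dense (Submodule.span ℂ S : Set E)) {K : Submodule ℂ ((E →L[ℂ] E) →L[ℂ] ℂ)}
    (hK : IsClosed (K : Set ((E →L[ℂ] E) →L[ℂ] ℂ)))
    (hSK : ∀ ξ ∈ S, ∀ η ∈ S, vecFunc ξ η ∈ K) : normalFunctionals E ≤ K := by
  have mem_of_right_mem (η) (hη : η ∈ S) (ξ) : vecFunc ξ η ∈ K :=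
    map_mem_of_dense_span hS
      ((ContinuousLinearMap.postcomp _ (innerSL ℂ η)).comp (ContinuousLinearMap.apply ℂ E)) hK
      (fun ξ hξ => hSK ξ hξ η hη) ξ
  have mem_of_any (ξ η) : vecFunc ξ η ∈ K :=
    map_mem_of_dense_span hS
      ((ContinuousLinearMap.precomp ℂ (ContinuousLinearMap.apply ℂ E ξ)).comp (innerSL ℂ)) hK
      (fun η hη => mem_of_right_mem η hη ξ) η
  refine Submodule.topologicalClosure_minimal _ (Submodule.span_le.2 ?_) hK
  rintro _ ⟨p, rfl⟩
  exact mem_of_any p.1 p.2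

lemma vecFunc_conjStarAlgAut (u : unitary (H →L[ℂ] H)) (ξ η : H) (x : H →L[ℂ] H) :
    vecFunc ξ η (conjStarAlgAut ℂ _ u x)
      = vecFunc ((star u : H →L[ℂ] H) ξ) ((star u : H →L[ℂ] H) η) x :=
  (ContinuousLinearMap.adjoint_inner_left (u : H →L[ℂ] H) _ η).symm

lemma norm_conjStarAlgAut {A : Type*} [NormedRing A] [StarRing A] [CStarRing A] [Algebra ℂ A]
    (u : unitary A) (x : A) : ‖conjStarAlgAut ℂ A u x‖ = ‖x‖ := by
  rw [Unitary.conjStarAlgAut_apply, ← Unitary.coe_star, CStarRing.norm_mul_coe_unitary,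
    CStarRing.norm_coe_unitary_mul]

lemma norm_apply_conjStarAlgAut_le (ω : (H →L[ℂ] H) →L[ℂ] ℂ) (u : unitary (H →L[ℂ] H))
    (x : H →L[ℂ] H) : ‖ω (conjStarAlgAut ℂ _ u x)‖ ≤ ‖ω‖ * ‖x‖ :=
  (ω.le_opNorm _).trans_eq (by rw [norm_conjStarAlgAut])

end NormalFunctionals

section JointEigenvectors

variable {G : Type*}

/-- The common eigenvectors of all `U t`, together with `0`. The eigenvalue is an arbitrary
function of `t`; that it is a character where `ξ ≠ 0` is automatic. -/
def jointEigenvectors [AddMonoid G] (U : AddChar G (unitary (H →L[ℂ] H))) : Set H :=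
  {ξ | ∀ t, ∃ c : ℂ, (U t : H →L[ℂ] H) ξ = c • ξ}

variable [AddGroup G] {U : AddChar G (unitary (H →L[ℂ] H))}

lemma coe_star_apply_eq_apply_neg (U : AddChar G (unitary (H →L[ℂ] H))) (t : G) :
    (star (U t) : H →L[ℂ] H) = U (-t) := by
  rw [U.map_neg_eq_inv, ← Unitary.star_eq_inv, Unitary.coe_star]

lemma exists_vecFunc_conjStarAlgAut_eq_mul {ξ η : H} (hξ : ξ ∈ jointEigenvectors U)
    (hη : η ∈ jointEigenvectors U) :
    ∃ χ : G → ℂ, ∀ t x, vecFunc ξ η (conjStarAlgAut ℂ _ (U t) x) = χ t * vecFunc ξ η x := by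
  choose a ha using hξ
  choose b hb using hη
  refine ⟨fun t => a (-t) * conj (b (-t)), fun t x => ?_⟩
  rw [vecFunc_conjStarAlgAut, coe_star_apply_eq_apply_neg, ha, hb]
  simp [vecFunc, mul_assoc]

end JointEigenvectors

section Average

variable {G : Type*} [TopologicalSpace G]

section AddMonoid

variable [AddMonoid G] (U : AddChar G (unitary (H →L[ℂ] H)))

/-- The functionals `ω` on `B(H)` for which every orbit `t ↦ ω(σ_t(x))` is continuous. -/
def continuousOrbitFunctionals : Submodule ℂ ((H →L[ℂ] H) →L[ℂ] ℂ) where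
  carrier := {ω | ∀ x, Continuous fun t => ω (conjStarAlgAut ℂ _ (U t) x)}
  zero_mem' _ := continuous_const
  add_mem' ha hb x := (ha x).add (hb x)
  smul_mem' c _ ha x := (ha x).const_smul c

lemma isClosed_continuousOrbitFunctionals :
    IsClosed (continuousOrbitFunctionals U : Set ((H →L[ℂ] H) →L[ℂ] ℂ)) := by
  have equicontinuous_orbit (x : H →L[ℂ] H) :
      Equicontinuous fun t (ω : (H →L[ℂ] H) →L[ℂ] ℂ) =>
        ω (conjStarAlgAut ℂ _ (U t) x) := by
    refine (LipschitzWith.uniformEquicontinuous _ ‖x‖₊ fun t => ?_).equicontinuous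
    refine LipschitzWith.of_dist_le_mul fun ω ω' => ?_
    rw [dist_eq_norm, dist_eq_norm, mul_comm]
    exact norm_apply_conjStarAlgAut_le (ω - ω') (U t) x
  have carrier_eq : (continuousOrbitFunctionals U : Set ((H →L[ℂ] H) →L[ℂ] ℂ)) =
      ⋂ (x) (t₀), {ω | ContinuousAt (fun t => ω (conjStarAlgAut ℂ _ (U t) x)) t₀} := by
    ext ω
    simp only [continuousOrbitFunctionals, continuous_iff_continuousAt, Set.mem_iInter]
    rfl
  rw [carrier_eq]
  exact isClosed_iInter fun x => isClosed_iInter fun t₀ =>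
    (equicontinuous_orbit x).isClosed_setOfPred_tendsto
      (ContinuousLinearMap.apply ℂ ℂ (conjStarAlgAut ℂ _ (U t₀) x)).continuous

end AddMonoid

variable [AddGroup G] [ContinuousNeg G] {U : AddChar G (unitary (H →L[ℂ] H))}

lemma normalFunctionals_le_continuousOrbitFunctionals
    (hU : ∀ ξ : H, Continuous fun t => (U t : H →L[ℂ] H) ξ) :
    normalFunctionals H ≤ continuousOrbitFunctionals U := by
  refine normalFunctionals_le_of_dense_span (S := Set.univ) (by simp)
    (isClosed_continuousOrbitFunctionals U) fun ξ _ η _ x => ?_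
  have continuous_star (ζ : H) : Continuous fun t => (star (U t) : H →L[ℂ] H) ζ := by
    simpa only [coe_star_apply_eq_apply_neg, Function.comp_def] using (hU ζ).comp continuous_neg
  simp only [vecFunc_conjStarAlgAut]
  exact (continuous_star η).inner (x.continuous.comp (continuous_star ξ))

variable (hU : ∀ ξ : H, Continuous fun t => (U t : H →L[ℂ] H) ξ)

/-- The bounded continuous function `t ↦ ω(σ_t(x))`, bilinear in the normal functional `ω` and
the operator `x`. -/
def orbitFunction : normalFunctionals H →ₗ[ℂ] (H →L[ℂ] H) →ₗ[ℂ] G →ᵇ ℂ :=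
  LinearMap.mk₂ ℂ
    (fun ω x => .ofNormedAddCommGroup (fun t => ω.1 (conjStarAlgAut ℂ _ (U t) x))
      (normalFunctionals_le_continuousOrbitFunctionals hU ω.2 x) (‖ω‖ * ‖x‖)
      fun t => norm_apply_conjStarAlgAut_le ω.1 (U t) x)
    (fun _ _ _ => rfl) (fun _ _ _ => rfl)
    (fun _ _ _ => by ext; simp only [map_add]; rfl)
    (fun _ _ _ => by ext; simp only [map_smul]; rfl)

lemma orbitFunction_apply (ω : normalFunctionals H) (x : H →L[ℂ] H) (t : G) :
    orbitFunction hU ω x t = ω.1 (conjStarAlgAut ℂ _ (U t) x) := rfl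

lemma norm_orbitFunction_le (ω : normalFunctionals H) (x : H →L[ℂ] H) :
    ‖orbitFunction hU ω x‖ ≤ ‖ω‖ * ‖x‖ :=
  BoundedContinuousFunction.norm_ofNormedAddCommGroup_le _ (by positivity)
    fun t => norm_apply_conjStarAlgAut_le ω.1 (U t) x

lemma orbitFunction_conjStarAlgAut (ω : normalFunctionals H) (x : H →L[ℂ] H) (s t : G) :
    orbitFunction hU ω (conjStarAlgAut ℂ _ (U s) x) t
      = orbitFunction hU ω x (t + s) := by
  rw [orbitFunction_apply, orbitFunction_apply, U.map_add_eq_mul,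
    Unitary.conjStarAlgAut_mul_apply]

variable {m : (G →ᵇ ℂ) →ₗ[ℂ] ℂ}

lemma norm_mean_orbitFunction_le (hm : IsMean m) (ω : normalFunctionals H) (x : H →L[ℂ] H) :
    ‖m (orbitFunction hU ω x)‖ ≤ 1 * ‖ω‖ * ‖x‖ := by
  rw [one_mul]
  exact (hm.norm_apply_le _).trans (norm_orbitFunction_le hU ω x)

/-- The averaging operator `ω ↦ ω'`, `ω'(x) = m(t ↦ ω(σ_t(x)))`, on normal functionals. -/
def average (hm : IsMean m) : normalFunctionals H →L[ℂ] (H →L[ℂ] H) →L[ℂ] ℂ :=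
  LinearMap.mkContinuous₂ (E := normalFunctionals H) (σ₁₃ := .id ℂ) (σ₂₃ := .id ℂ)
    ((orbitFunction hU).compr₂ m) 1 (norm_mean_orbitFunction_le hU hm)

lemma average_apply (hm : IsMean m) (ω : normalFunctionals H) (x : H →L[ℂ] H) :
    average hU hm ω x = m (orbitFunction hU ω x) := rfl

lemma norm_average_apply_le (hm : IsMean m) (ω : normalFunctionals H) :
    ‖average hU hm ω‖ ≤ ‖ω‖ :=
  ContinuousLinearMap.opNorm_le_bound _ (norm_nonneg ω) fun x =>
    (hm.norm_apply_le _).trans (norm_orbitFunction_le hU ω x)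

lemma average_conjStarAlgAut (hm : IsInvariantMean m) (ω : normalFunctionals H) (s : G)
    (x : H →L[ℂ] H) :
    average hU hm.toIsMean ω (conjStarAlgAut ℂ _ (U s) x)
      = average hU hm.toIsMean ω x :=
  hm.map_translate _ _ s (orbitFunction_conjStarAlgAut hU ω x s)

lemma average_eq_self_or_eq_zero (hm : IsInvariantMean m) (ω : normalFunctionals H) {χ : G → ℂ}
    (hχ : ∀ t x, ω.1 (conjStarAlgAut ℂ _ (U t) x) = χ t * ω.1 x) :
    average hU hm.toIsMean ω = ω ∨ average hU hm.toIsMean ω = 0 := by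
  by_cases trivial_χ : ∀ s, χ s = 1
  · left
    ext x
    have orbit_const : orbitFunction hU ω x = ω.1 x • 1 := by
      ext t
      simp [orbitFunction_apply, hχ, trivial_χ, -Unitary.conjStarAlgAut_apply]
    simp [average_apply, orbit_const, hm.map_one]
  · right
    ext x
    obtain ⟨s, hs⟩ := not_forall.1 trivial_χ
    have orbit_smul :
        orbitFunction hU ω (conjStarAlgAut ℂ _ (U s) x) = χ s • orbitFunction hU ω x := by
      ext t
      simp only [BoundedContinuousFunction.coe_smul, orbitFunction_apply, hχ, smul_eq_mul]
      ring
    have average_fixed : χ s * average hU hm.toIsMean ω x = average hU hm.toIsMean ω x :=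
      calc
        _ = m (χ s • orbitFunction hU ω x) := (map_smul m _ _).symm
        _ = average hU hm.toIsMean ω (conjStarAlgAut ℂ _ (U s) x) := by
          rw [← orbit_smul, average_apply]
        _ = average hU hm.toIsMean ω x := average_conjStarAlgAut hU hm ω s x
    exact (mul_left_eq_self₀.1 average_fixed).resolve_left hs

lemma average_mem_normalFunctionals (hm : IsInvariantMean m)
    (hdense : Dense (Submodule.span ℂ (jointEigenvectors U) : Set H)) (ω : normalFunctionals H) :
    average hU hm.toIsMean ω ∈ normalFunctionals H := by
  let K := ((normalFunctionals H).comap (average hU hm.toIsMean).toLinearMap).map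
    (normalFunctionals H).subtype
  have isClosed_K : IsClosed (K : Set ((H →L[ℂ] H) →L[ℂ] ℂ)) :=
    isClosed_normalFunctionals.isClosedEmbedding_subtypeVal.isClosedMap _
      (isClosed_normalFunctionals.preimage (average hU hm.toIsMean).continuous)
  have vecFunc_mem_K : ∀ ξ ∈ jointEigenvectors U, ∀ η ∈ jointEigenvectors U,
      vecFunc ξ η ∈ K := fun ξ hξ η hη => by
    obtain ⟨χ, hχ⟩ := exists_vecFunc_conjStarAlgAut_eq_mul hξ hη
    have vecFunc_mem := vecFunc_mem_normalFunctionals ξ η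
    refine ⟨⟨_, vecFunc_mem⟩, ?_, rfl⟩
    change average hU hm.toIsMean ⟨_, vecFunc_mem⟩ ∈ normalFunctionals H
    rcases average_eq_self_or_eq_zero hU hm ⟨_, vecFunc_mem⟩ hχ with h | h
    · rwa [h]
    · rw [h]
      exact zero_mem _
  obtain ⟨ω₀, hω₀, h⟩ := normalFunctionals_le_of_dense_span hdense isClosed_K vecFunc_mem_K ω.2
  rwa [Subtype.ext h] at hω₀

end Average

theorem averaged_functional_normal_general {G : Type*} [AddGroup G] [TopologicalSpace G]
    [ContinuousNeg G] {U : AddChar G (unitary (H →L[ℂ] H))}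
    (hU : ∀ ξ : H, Continuous fun t => (U t : H →L[ℂ] H) ξ)
    (hdense : Dense (Submodule.span ℂ (jointEigenvectors U) : Set H))
    {m : (G →ᵇ ℂ) →ₗ[ℂ] ℂ} (hm : IsInvariantMean m)
    (ω : (H →L[ℂ] H) →L[ℂ] ℂ) (hω : NormalFn ω) :
    ∃ ω' : (H →L[ℂ] H) →L[ℂ] ℂ, NormalFn ω' ∧ ‖ω'‖ ≤ ‖ω‖ ∧
      (∀ (x : H →L[ℂ] H) (f : G →ᵇ ℂ),
        (∀ t, f t = ω (conjStarAlgAut ℂ _ (U t) x)) → ω' x = m f) ∧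
      ∀ (t : G) (x : H →L[ℂ] H), ω' (conjStarAlgAut ℂ _ (U t) x) = ω' x := by
  refine ⟨average hU hm.toIsMean ⟨ω, hω⟩, average_mem_normalFunctionals hU hm hdense _,
    norm_average_apply_le hU hm.toIsMean _, fun x f hf => ?_, average_conjStarAlgAut hU hm _⟩
  exact congrArg m (BoundedContinuousFunction.ext fun t => (hf t).symm)

namespace DiscreteQGroup

variable (Q : DiscreteQGroup H HH)

/-- The modular group `t ↦ Δ_φ^{it}` as a homomorphism into the unitary group. -/
def modularUnitary : AddChar ℝ (unitary (H →L[ℂ] H)) where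
  toFun t := ⟨Q.Dphi t, Q.Dphi_unitary t⟩
  map_zero_eq_one' := Subtype.ext Q.Dphi_zero
  map_add_eq_mul' s t := Subtype.ext (Q.Dphi_add s t)

lemma Lam_e_mem_jointEigenvectors (α : Q.I) (k l : Fin (Q.nn α)) :
    Q.Lam (Q.e α k l) ∈ jointEigenvectors Q.modularUnitary := by
  have finSupp_e : Q.e α k l * ∑ β ∈ {α}, ∑ j, Q.e β j j = Q.e α k l := by
    simp [Finset.mul_sum, Q.e_mul]
  intro t
  have Dphi_Lam_e := Q.Dphi_Lam t _ (Q.e_mem α k l) ⟨{α}, finSupp_e⟩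
  rw [Q.Dphi_e, map_smul] at Dphi_Lam_e
  exact ⟨_, Dphi_Lam_e⟩

lemma Lam_mem_span_jointEigenvectors {x : H →L[ℂ] H} (hx : x ∈ Q.M) (hfin : Q.FinSupp x) :
    Q.Lam x ∈ Submodule.span ℂ (jointEigenvectors Q.modularUnitary) := by
  obtain ⟨F, hF⟩ := hfin
  rw [← hF, zF, Finset.mul_sum, map_sum]
  refine Submodule.sum_mem _ fun α _ => ?_
  obtain ⟨c, hc⟩ := Q.block_span α x hx
  simp only [z, hc, map_sum, map_smul]
  exact Submodule.sum_mem _ fun k _ => Submodule.sum_mem _ fun l _ =>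
    Submodule.smul_mem _ _ (Submodule.subset_span (Q.Lam_e_mem_jointEigenvectors α k l))

lemma dense_span_jointEigenvectors :
    Dense (Submodule.span ℂ (jointEigenvectors Q.modularUnitary) : Set H) := by
  refine Q.Lam_dense.mono ?_
  rintro _ ⟨x, hx, hfin, rfl⟩
  exact Q.Lam_mem_span_jointEigenvectors hx hfin

end DiscreteQGroup

/-- **Lemma 7.** Let `m_ℝ` be an invariant mean on `L^∞(ℝ)` (restricted here to the
bounded continuous functions, to which it is only ever applied). For a normal `ω ∈ M_*`
of a discrete quantum group, the averaged functional `ω'(x) = m_ℝ(t ↦ ω(σ^φ_t(x)))` is a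
normal functional with `‖ω'‖ ≤ ‖ω‖`, and it is `σ^φ`-invariant. -/
theorem averaged_functional_normal (Q : DiscreteQGroup H HH)
    (mR : BoundedContinuousFunction ℝ ℂ →ₗ[ℂ] ℂ)
    (hm1 : mR 1 = 1)
    (hmpos : ∀ f : BoundedContinuousFunction ℝ ℂ, (∀ t, 0 ≤ f t) → 0 ≤ mR f)
    (hminv : ∀ (f g : BoundedContinuousFunction ℝ ℂ) (s : ℝ),
        (∀ t, g t = f (t + s)) → mR g = mR f)
    (ω : (H →L[ℂ] H) →L[ℂ] ℂ) (hω : NormalFn ω) :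
    ∃ ω' : (H →L[ℂ] H) →L[ℂ] ℂ, NormalFn ω' ∧ ‖ω'‖ ≤ ‖ω‖ ∧
      (∀ (x : H →L[ℂ] H) (f : BoundedContinuousFunction ℝ ℂ),
        (∀ t, f t = ω (Q.sigma t x)) → ω' x = mR f) ∧
      ∀ (t : ℝ) (x : H →L[ℂ] H), ω' (Q.sigma t x) = ω' x := by
  exact averaged_functional_normal_general (U := Q.modularUnitary) Q.Dphi_cont
    Q.dense_span_jointEigenvectors ⟨⟨hm1, hmpos⟩, hminv⟩ ω hω
end
end

section
/- Let n, m ≥ 1 and let A be a complex (nm)×(nm) matrix, regarded as an n×n block matrix with blocks A_{kl} ∈ M_m(ℂ), 1 ≤ k,l ≤ n. Let |A| = (A*A)^{1/2} denote the positive square root of A*A, with blocks |A|_{kl} ∈ M_m(ℂ), and for B ∈ M_m(ℂ) write |B| = (B*B)^{1/2}. Then for all k,l: |Tr(|A|_{kl})| ≤ Σ_{p=1}^{n} Tr(|A_{pl}|). -/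
/-!
An interface for (von Neumann algebraic) locally compact quantum groups and
discrete quantum groups, following Kustermans–Vaes, encoded via the
multiplicative unitary `W` acting on (a model `HH` of) `H ⊗ H`.
-/

open scoped ComplexInnerProductSpace ComplexOrder ENNReal
open Filter Topology

noncomputable section

open scoped MatrixOrder

/-!
Write `A = V |A|` with `V` a partial isometry. Then `|A| = Vᴴ A`, so that
`|A|_{kl} = ∑ p, (Vᴴ)_{kp} A_{pl}`, and every block `(Vᴴ)_{kp}` of the contraction `Vᴴ` is a
contraction. It remains to bound `|Tr (X B)| ≤ ‖X‖ Tr |B|`: the polar decomposition of `B` reduces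
this to `B` positive semidefinite, hence a sum of matrices `v vᴴ`, for which
`Tr (X v vᴴ) = ⟪v, X v⟫`.
-/

section PolarTraceBound

open Matrix
open scoped Matrix.Norms.L2Operator

lemma exists_isSelfAdjoint_commute_mul_mul_self_eq {R : Type*} [Ring R] [StarRing R]
    [TopologicalSpace R] [Algebra ℝ R] [ContinuousFunctionalCalculus ℝ R IsSelfAdjoint]
    {a : R} (ha : IsSelfAdjoint a) (hfin : (spectrum ℝ a).Finite) :
    ∃ s : R, IsSelfAdjoint s ∧ Commute s a ∧ a * s * a = a := by
  have hcont : ContinuousOn (fun x : ℝ => x⁻¹) (spectrum ℝ a) := hfin.continuousOn _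
  -- The Moore–Penrose inverse of `a`, thanks to the convention `0⁻¹ = 0`.
  refine ⟨cfc (fun x : ℝ => x⁻¹) a, cfc_predicate _ a, ?_, ?_⟩
  · simpa only [cfc_id' ℝ a] using cfc_commute_cfc (fun x : ℝ => x⁻¹) (fun x => x) a
  · calc a * cfc (fun x : ℝ => x⁻¹) a * a
        = cfc (fun x : ℝ => x * x⁻¹ * x) a := by
          rw [cfc_mul .., cfc_mul .., cfc_id' ℝ a]
      _ = a := by simp only [mul_inv_mul_cancel, cfc_id' ℝ a]

lemma submatrix_mul_eq_sum_submatrix_mk {R a b c d ι μ : Type*} [Fintype ι] [Fintype μ]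
    [NonUnitalNonAssocSemiring R] (M : Matrix a (ι × μ) R) (N : Matrix (ι × μ) b R)
    (f : c → a) (g : d → b) :
    (M * N).submatrix f g = ∑ p, M.submatrix f (Prod.mk p) * N.submatrix (Prod.mk p) g := by
  ext i j
  simp only [submatrix_apply, mul_apply, Matrix.sum_apply, Fintype.sum_prod_type]

variable {𝕜 m n : Type*} [RCLike 𝕜] [Fintype m] [Fintype n] [DecidableEq n]

lemma l2_opNorm_le_one_of_partialIsometry {V : Matrix m n 𝕜} (hV : IsStarProjection (Vᴴ * V)) :
    ‖V‖ ≤ 1 := by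
  have hsq : ‖V‖ * ‖V‖ ≤ 1 := l2_opNorm_conjTranspose_mul_self V ▸ hV.norm_le
  exact le_of_abs_le (abs_le_one_iff_mul_self_le_one.mpr hsq)

lemma l2_opNorm_one_submatrix_le_one [DecidableEq m] {f : n → m} (hf : Function.Injective f) :
    ‖(1 : Matrix m m 𝕜).submatrix id f‖ ≤ 1 := by
  have hisom : ((1 : Matrix m m 𝕜).submatrix id f)ᴴ * (1 : Matrix m m 𝕜).submatrix id f = 1 := by
    rw [conjTranspose_submatrix, conjTranspose_one,
      ← submatrix_mul _ _ f id f Function.bijective_id, Matrix.one_mul, submatrix_one f hf]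
  exact l2_opNorm_le_one_of_partialIsometry (hisom ▸ .one _)

lemma l2_opNorm_submatrix_le {μ ν : Type*} [Fintype μ] [Fintype ν] [DecidableEq ν]
    (M : Matrix m n 𝕜) {f : μ → m} {g : ν → n} (hf : Function.Injective f)
    (hg : Function.Injective g) : ‖M.submatrix f g‖ ≤ ‖M‖ := by
  classical
  let E : Matrix m μ 𝕜 := (1 : Matrix m m 𝕜).submatrix id f
  let F : Matrix n ν 𝕜 := (1 : Matrix n n 𝕜).submatrix id g
  have hM : M.submatrix f g = Eᴴ * M * F := by
    ext i j
    simp [E, F, mul_apply, one_apply]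
  have hE : ‖Eᴴ‖ ≤ 1 := (l2_opNorm_conjTranspose E).trans_le (l2_opNorm_one_submatrix_le_one hf)
  have hF : ‖F‖ ≤ 1 := l2_opNorm_one_submatrix_le_one hg
  calc ‖M.submatrix f g‖ = ‖Eᴴ * M * F‖ := by rw [hM]
    _ ≤ ‖Eᴴ‖ * ‖M‖ * ‖F‖ :=
      (l2_opNorm_mul _ _).trans (mul_le_mul_of_nonneg_right (l2_opNorm_mul _ _) (norm_nonneg _))
    _ ≤ 1 * ‖M‖ * 1 := by gcongr
    _ = ‖M‖ := by rw [one_mul, mul_one]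

lemma norm_star_dotProduct_mulVec_le (Y : Matrix n n 𝕜) (v : n → 𝕜) :
    ‖star v ⬝ᵥ Y *ᵥ v‖ ≤ ‖Y‖ * RCLike.re (star v ⬝ᵥ v) := by
  have hinner (u w : n → 𝕜) : star u ⬝ᵥ w = inner 𝕜 (WithLp.toLp 2 u) (WithLp.toLp 2 w) := by
    rw [EuclideanSpace.inner_toLp_toLp, dotProduct_comm]
  calc ‖star v ⬝ᵥ Y *ᵥ v‖ ≤ ‖WithLp.toLp 2 v‖ * ‖WithLp.toLp 2 (Y *ᵥ v)‖ := by
        rw [hinner]; exact norm_inner_le_norm _ _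
    _ ≤ ‖WithLp.toLp 2 v‖ * (‖Y‖ * ‖WithLp.toLp 2 v‖) := by
        gcongr; exact l2_opNorm_mulVec Y (WithLp.toLp 2 v)
    _ = ‖Y‖ * RCLike.re (star v ⬝ᵥ v) := by
        rw [hinner, inner_self_eq_norm_mul_norm]; ring

lemma norm_trace_mul_le_of_posSemidef (Y : Matrix n n 𝕜) {P : Matrix n n 𝕜}
    (hP : P.PosSemidef) : ‖(Y * P).trace‖ ≤ ‖Y‖ * RCLike.re P.trace := by
  obtain ⟨r, v, rfl⟩ := posSemidef_iff_eq_sum_vecMulVec.mp hP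
  simp only [Finset.mul_sum, trace_sum, mul_vecMulVec, trace_vecMulVec, map_sum]
  refine norm_sum_le_of_le _ fun i _ => ?_
  rw [dotProduct_comm, dotProduct_comm (v i)]
  exact norm_star_dotProduct_mulVec_le Y (v i)

/-- The absolute value `|A| = (Aᴴ A)^{1/2}` of a matrix. It agrees with `CFC.abs` on square
matrices, but is defined for rectangular ones as well. -/
def matrixAbs (A : Matrix m n 𝕜) : Matrix n n 𝕜 := CFC.sqrt (Aᴴ * A)

lemma posSemidef_matrixAbs (A : Matrix m n 𝕜) : (matrixAbs A).PosSemidef :=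
  nonneg_iff_posSemidef.mp (CFC.sqrt_nonneg _)

lemma re_trace_matrixAbs_nonneg (A : Matrix m n 𝕜) : 0 ≤ RCLike.re (matrixAbs A).trace :=
  (RCLike.nonneg_iff.mp (posSemidef_matrixAbs A).trace_nonneg).1

lemma matrixAbs_mul_self (A : Matrix m n 𝕜) : matrixAbs A * matrixAbs A = Aᴴ * A :=
  CFC.sqrt_mul_sqrt_self _ (posSemidef_conjTranspose_mul_self A).nonneg

lemma exists_polar_decomposition (A : Matrix m n 𝕜) :
    ∃ V : Matrix m n 𝕜,
      IsStarProjection (Vᴴ * V) ∧ V * matrixAbs A = A ∧ Vᴴ * A = matrixAbs A := by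
  set P := matrixAbs A
  have hPP : P * P = Aᴴ * A := matrixAbs_mul_self A
  obtain ⟨S, hS, hSP, hPSP⟩ := exists_isSelfAdjoint_commute_mul_mul_self_eq
    (posSemidef_matrixAbs A).isHermitian.isSelfAdjoint P.finite_real_spectrum
  have hSH : Sᴴ = S := hS
  have hVA : (A * S)ᴴ * A = P := by
    rw [conjTranspose_mul, hSH, Matrix.mul_assoc, ← hPP, ← Matrix.mul_assoc, hSP.eq, hPSP]
  have hVV : (A * S)ᴴ * (A * S) = P * S := by rw [← Matrix.mul_assoc, hVA]
  have hker : Aᴴ * A * (S * P - 1) = 0 := by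
    rw [← hPP, Matrix.mul_assoc, Matrix.mul_sub, ← Matrix.mul_assoc P S P, hPSP, Matrix.mul_one,
      sub_self, Matrix.mul_zero]
  refine ⟨A * S, ⟨?_, isHermitian_conjTranspose_mul_self (A * S)⟩, ?_, hVA⟩
  · rw [hVV, IsIdempotentElem, ← Matrix.mul_assoc, hPSP]
  · rwa [conjTranspose_mul_self_mul_eq_zero, Matrix.mul_sub, Matrix.mul_one, sub_eq_zero,
      ← Matrix.mul_assoc] at hker

lemma norm_trace_mul_le [DecidableEq m] (X : Matrix n m 𝕜) (B : Matrix m n 𝕜) :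
    ‖(X * B).trace‖ ≤ ‖X‖ * RCLike.re (matrixAbs B).trace := by
  obtain ⟨V, hV, hVB, -⟩ := exists_polar_decomposition B
  have hXV : ‖X * V‖ ≤ ‖X‖ := (l2_opNorm_mul X V).trans
    (mul_le_of_le_one_right (norm_nonneg X) (l2_opNorm_le_one_of_partialIsometry hV))
  have htrace : 0 ≤ RCLike.re (matrixAbs B).trace := re_trace_matrixAbs_nonneg B
  calc ‖(X * B).trace‖ = ‖(X * V * matrixAbs B).trace‖ := by rw [Matrix.mul_assoc, hVB]
    _ ≤ ‖X * V‖ * RCLike.re (matrixAbs B).trace :=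
      norm_trace_mul_le_of_posSemidef _ (posSemidef_matrixAbs B)
    _ ≤ ‖X‖ * RCLike.re (matrixAbs B).trace := by gcongr

theorem trace_block_abs_le_general {ι κ μ ν : Type*} [Fintype ι] [Fintype κ] [Fintype μ]
    [Fintype ν] [DecidableEq κ] [DecidableEq ν]
    (A : Matrix (ι × μ) (κ × ν) 𝕜) (k l : κ) :
    ‖((matrixAbs A).submatrix (Prod.mk k) (Prod.mk l)).trace‖
      ≤ ∑ p, RCLike.re (matrixAbs (A.submatrix (Prod.mk p) (Prod.mk l))).trace := by
  classical
  obtain ⟨V, hV, -, hVA⟩ := exists_polar_decomposition A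
  have hblock (p : ι) : ‖Vᴴ.submatrix (Prod.mk k) (Prod.mk p)‖ ≤ 1 :=
    calc ‖Vᴴ.submatrix (Prod.mk k) (Prod.mk p)‖ ≤ ‖Vᴴ‖ :=
          l2_opNorm_submatrix_le Vᴴ (Prod.mk_right_injective k) (Prod.mk_right_injective p)
      _ = ‖V‖ := l2_opNorm_conjTranspose V
      _ ≤ 1 := l2_opNorm_le_one_of_partialIsometry hV
  rw [← hVA, submatrix_mul_eq_sum_submatrix_mk, trace_sum]
  refine norm_sum_le_of_le _ fun p _ => (norm_trace_mul_le _ _).trans ?_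
  exact mul_le_of_le_one_left (re_trace_matrixAbs_nonneg _) (hblock p)

end PolarTraceBound

/-- The tracial core of Lemma 3.11: for an `n × n` block matrix `A` with blocks
`A_{kl} ∈ M_m(ℂ)`, and `|A| = (A* A)^{1/2}` with blocks `|A|_{kl}`, one has
`|Tr(|A|_{kl})| ≤ ∑_p Tr(|A_{pl}|)`. -/
theorem trace_block_abs_le (n m : ℕ) (hn : 1 ≤ n) (hm : 1 ≤ m)
    (A : Matrix (Fin n × Fin m) (Fin n × Fin m) ℂ) (k l : Fin n) :
    ‖(Matrix.trace (Matrix.of fun i j : Fin m =>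
          CFC.sqrt (A.conjTranspose * A) (k, i) (l, j)))‖
      ≤ ∑ p : Fin n,
          ((CFC.sqrt ((Matrix.of fun i j : Fin m => A (p, i) (l, j)).conjTranspose *
              (Matrix.of fun i j : Fin m => A (p, i) (l, j)))).trace).re :=
  trace_block_abs_le_general A k l
end
end
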